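/- For every network (X, A_X), the unilateral clustering output u^U_X, defined by u^U_X(x,x') = min over chains C(x,x') from x to x' of max_i min(A_X(x_i,x_{i+1}), A_X(x_{i+1},x_i)), is a valid ultrametric on X: it is nonnegative, u^U_X(x,x') = 0 iff x = x', it is symmetric, and it satisfies the strong triangle inequality u^U_X(x,x'') ≤ max(u^U_X(x,x'), u^U_X(x',x'')) for all x,x',x''. -/

import Mathlib

noncomputable section

/-- A dissimilarity function on a node set: nonnegative and zero exactly on the diagonal.
It need not be symmetric nor satisfy the triangle inequality. -/
def IsDissim {X : Type} (A : X → X → ℝ) : Prop :=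
  (∀ x x', 0 ≤ A x x') ∧ (∀ x x', A x x' = 0 ↔ x = x')

/-- A symmetric dissimilarity. -/
def IsSym {X : Type} (A : X → X → ℝ) : Prop := ∀ x x', A x x' = A x' x

/-- An ultrametric: nonnegative, zero exactly on the diagonal, symmetric, and
satisfying the strong triangle inequality. -/
def IsUltrametric {X : Type} (u : X → X → ℝ) : Prop :=
  (∀ x x', 0 ≤ u x x') ∧ (∀ x x', u x x' = 0 ↔ x = x') ∧
    (∀ x x', u x x' = u x' x) ∧
    (∀ x x' x'', u x x'' ≤ max (u x x') (u x' x''))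

/-- The cost of the chain `x :: l`: the maximum dissimilarity over consecutive links. -/
def chainCost {X : Type} (A : X → X → ℝ) : X → List X → ℝ
  | _, [] => 0
  | x, y :: l => max (A x y) (chainCost A y l)

/-- The set of costs of chains from `x` to `x'`. -/
def chainCosts {X : Type} (A : X → X → ℝ) (x x' : X) : Set ℝ :=
  {c | ∃ l : List X, (x :: l).getLast (List.cons_ne_nil x l) = x' ∧ chainCost A x l = c}

/-- The directed minimum chain cost `ũ*_X(x,x')`: minimum cost over all chains from `x` to `x'`. -/
def minChainCost {X : Type} (A : X → X → ℝ) (x x' : X) : ℝ :=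
  sInf (chainCosts A x x')

/-- The nonreciprocal ultrametric `u^NR`. -/
def nonrecipUltra {X : Type} (A : X → X → ℝ) (x x' : X) : ℝ :=
  max (minChainCost A x x') (minChainCost A x' x)

/-- The reciprocal ultrametric `u^R`. -/
def recipUltra {X : Type} (A : X → X → ℝ) (x x' : X) : ℝ :=
  minChainCost (fun a b => max (A a b) (A b a)) x x'

/-- The unilateral ultrametric `u^U`. -/
def uniUltra {X : Type} (A : X → X → ℝ) (x x' : X) : ℝ :=
  minChainCost (fun a b => min (A a b) (A b a)) x x'

/-- The minimum loop cost `mlc(X, A_X)`: minimum cost over loops, i.e. chains from some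
node `x` back to itself containing at least one node different from `x`. -/
def mlc {X : Type} (A : X → X → ℝ) : ℝ :=
  sInf {c | ∃ (x : X) (l : List X),
    (x :: l).getLast (List.cons_ne_nil x l) = x ∧ (∃ y ∈ l, y ≠ x) ∧ chainCost A x l = c}

/-- The separation `sep(X, A_X)`: minimum dissimilarity over pairs of distinct nodes. -/
def sep {X : Type} (A : X → X → ℝ) : ℝ :=
  sInf {c | ∃ x x' : X, x ≠ x' ∧ A x x' = c}

/-- A hierarchical clustering method: assigns to every (finite) network an output
two-variable function on the same node set. -/
abbrev HCMethod := ∀ (X : Type) [Fintype X], (X → X → ℝ) → X → X → ℝ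

/-- A hierarchical clustering method outputs an ultrametric on every network. -/
def IsHCMethod (H : HCMethod) : Prop :=
  ∀ (X : Type) [Fintype X] (A : X → X → ℝ), IsDissim A → IsUltrametric (H X A)

/-- `p, q` are the two (distinct) nodes of a two-node set. -/
def TwoNode {X : Type} (p q : X) : Prop := p ≠ q ∧ ∀ x : X, x = p ∨ x = q

/-- Axiom of Value (A1): on every two-node network the output clusters the two nodes at
the maximum of the two dissimilarities. -/
def AxiomValue (H : HCMethod) : Prop :=
  ∀ (X : Type) [Fintype X] (p q : X), TwoNode p q →
    ∀ A : X → X → ℝ, IsDissim A → H X A p q = max (A p q) (A q p)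

/-- Axiom of Transformation (A2): dissimilarity-reducing maps do not increase output values. -/
def AxiomTransform (H : HCMethod) : Prop :=
  ∀ (X Y : Type) [Fintype X] [Fintype Y] (AX : X → X → ℝ) (AY : Y → Y → ℝ),
    IsDissim AX → IsDissim AY →
    ∀ φ : X → Y, (∀ x x', AY (φ x) (φ x') ≤ AX x x') →
    ∀ x x' : X, H Y AY (φ x) (φ x') ≤ H X AX x x'

/-- The canonical dissimilarity `A_{n,α,β}` on `Fin n`: `α` for `i > j`, `β` for `i < j`,
`0` on the diagonal. -/
def canonDissim (n : ℕ) (α β : ℝ) : Fin n → Fin n → ℝ :=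
  fun i j => if i = j then 0 else if j < i then α else β

/-- Extended Axiom of Value (A1'): on every permuted canonical network `Δ_n(α,β,Π)` the
output ultrametric equals `max(α,β)` off the diagonal. -/
def ExtAxiomValue (H : HCMethod) : Prop :=
  ∀ (n : ℕ) (α β : ℝ), 0 < α → 0 < β → ∀ π : Equiv.Perm (Fin n),
    ∀ i j : Fin n, i ≠ j →
      H (Fin n) (fun i j => canonDissim n α β (π i) (π j)) i j = max α β

/-- Alternative Axiom of Value (A1''): on every two-node network the output clusters the
two nodes at the minimum of the two dissimilarities. -/
def AltAxiomValue (H : HCMethod) : Prop :=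
  ∀ (X : Type) [Fintype X] (p q : X), TwoNode p q →
    ∀ A : X → X → ℝ, IsDissim A → H X A p q = min (A p q) (A q p)

/-- Agnostic Axiom of Value (A1'''): on every two-node network the output value lies
between the minimum and maximum of the two dissimilarities. -/
def AgnAxiomValue (H : HCMethod) : Prop :=
  ∀ (X : Type) [Fintype X] (p q : X), TwoNode p q →
    ∀ A : X → X → ℝ, IsDissim A →
      min (A p q) (A q p) ≤ H X A p q ∧ H X A p q ≤ max (A p q) (A q p)

/- For a scale `r > 0`, a chain has cost below `r` exactly when all its links are shorter than `r`,
so the minimum chain cost from `x` to `y` is below `r` exactly when `y` is reachable from `x` along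
links shorter than `r`. Reachability is always reflexive and transitive, which gives the strong
triangle inequality, and it is symmetric when the dissimilarity is. If distinct nodes are at
dissimilarity at least `d > 0`, then at scale `d` no node reaches another one, which gives
definiteness. -/

section MinChainCost

open Relation

variable {X : Type} {A : X → X → ℝ}

lemma chainCost_nonneg (A : X → X → ℝ) (x : X) : ∀ l : List X, 0 ≤ chainCost A x l
  | [] => le_rfl
  | y :: l => le_max_of_le_right (chainCost_nonneg A y l)

lemma chainCost_lt_iff {r : ℝ} {x : X} {l : List X} :
    chainCost A x l < r ↔ 0 < r ∧ (x :: l).IsChain (fun a b ↦ A a b < r) := by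
  induction l generalizing x with
  | nil => simp [chainCost]
  | cons y l ih => rw [chainCost, max_lt_iff, ih, List.isChain_cons_cons, and_left_comm]

lemma nonneg_of_mem_chainCosts {x y : X} {c : ℝ} (hc : c ∈ chainCosts A x y) : 0 ≤ c := by
  obtain ⟨l, -, rfl⟩ := hc
  exact chainCost_nonneg A x l

lemma bddBelow_chainCosts (A : X → X → ℝ) (x y : X) : BddBelow (chainCosts A x y) :=
  ⟨0, fun _ ↦ nonneg_of_mem_chainCosts⟩

lemma chainCosts_nonempty (A : X → X → ℝ) (x y : X) : (chainCosts A x y).Nonempty :=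
  ⟨_, [y], rfl, rfl⟩

lemma minChainCost_nonneg (A : X → X → ℝ) (x y : X) : 0 ≤ minChainCost A x y :=
  Real.sInf_nonneg fun _ ↦ nonneg_of_mem_chainCosts

lemma minChainCost_lt_iff {r : ℝ} {x y : X} :
    minChainCost A x y < r ↔ 0 < r ∧ ReflTransGen (fun a b ↦ A a b < r) x y := by
  rw [minChainCost, csInf_lt_iff (bddBelow_chainCosts A x y) (chainCosts_nonempty A x y)]
  constructor
  · rintro ⟨_, ⟨l, hlast, rfl⟩, hlt⟩
    obtain ⟨hr, hchain⟩ := chainCost_lt_iff.1 hlt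
    exact ⟨hr, List.relationReflTransGen_of_exists_isChain_cons l hchain hlast⟩
  · rintro ⟨hr, hreach⟩
    obtain ⟨l, hchain, hlast⟩ := List.exists_isChain_cons_of_relationReflTransGen hreach
    exact ⟨_, ⟨l, hlast, rfl⟩, chainCost_lt_iff.2 ⟨hr, hchain⟩⟩

lemma minChainCost_self (A : X → X → ℝ) (x : X) : minChainCost A x x = 0 :=
  le_antisymm (le_of_forall_gt fun _ hr ↦ minChainCost_lt_iff.2 ⟨hr, .refl⟩)
    (minChainCost_nonneg A x x)

lemma minChainCost_swap (A : X → X → ℝ) (x y : X) :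
    minChainCost (Function.swap A) x y = minChainCost A y x :=
  eq_of_forall_gt_iff fun _ ↦ by
    rw [minChainCost_lt_iff, minChainCost_lt_iff, ← reflTransGen_swap]

lemma isSym_minChainCost (hA : IsSym A) : IsSym (minChainCost A) := fun x y ↦ by
  have hswap : Function.swap A = A := funext₂ fun a b ↦ hA b a
  rw [← minChainCost_swap, hswap]

lemma minChainCost_le_max (A : X → X → ℝ) (x y z : X) :
    minChainCost A x z ≤ max (minChainCost A x y) (minChainCost A y z) := by
  refine le_of_forall_gt fun r hr ↦ ?_
  obtain ⟨hxy, hyz⟩ := max_lt_iff.1 hr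
  obtain ⟨hr₀, hreach_xy⟩ := minChainCost_lt_iff.1 hxy
  obtain ⟨-, hreach_yz⟩ := minChainCost_lt_iff.1 hyz
  exact minChainCost_lt_iff.2 ⟨hr₀, hreach_xy.trans hreach_yz⟩

lemma le_minChainCost {d : ℝ} (hd : ∀ a b, a ≠ b → d ≤ A a b) {x y : X} (hxy : x ≠ y) :
    d ≤ minChainCost A x y := by
  by_contra! hlt
  obtain ⟨-, hreach⟩ := minChainCost_lt_iff.1 hlt
  have hlink : (fun a b ↦ A a b < d) ≤ Eq := fun a b hab ↦
    of_not_not fun hne ↦ (hd a b hne).not_gt hab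
  exact hxy (reflTransGen_le_of_le hlink x y hreach)

lemma isUltrametric_minChainCost {d : ℝ} (hA : IsSym A) (hd₀ : 0 < d)
    (hd : ∀ a b, a ≠ b → d ≤ A a b) : IsUltrametric (minChainCost A) := by
  refine ⟨minChainCost_nonneg A, fun x y ↦ ⟨fun h ↦ ?_, ?_⟩, isSym_minChainCost hA,
    minChainCost_le_max A⟩
  · by_contra hxy
    exact (hd₀.trans_le (le_minChainCost hd hxy)).ne' h
  · rintro rfl
    exact minChainCost_self A x

end MinChainCost

lemma IsDissim.pos {X : Type} {A : X → X → ℝ} (hA : IsDissim A) {x y : X} (hxy : x ≠ y) :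
    0 < A x y :=
  (hA.1 x y).lt_of_ne' fun h ↦ hxy ((hA.2 x y).1 h)

lemma IsDissim.exists_pos_forall_le {X : Type} [Finite X] {A : X → X → ℝ} (hA : IsDissim A) :
    ∃ d, 0 < d ∧ ∀ x y, x ≠ y → d ≤ A x y := by
  obtain ⟨d, hd₀, hd⟩ := Pi.exists_forall_pos_add_lt
    (fun p : {p : X × X // p.1 ≠ p.2} ↦ hA.pos p.2)
  exact ⟨d, hd₀, fun x y hxy ↦ by simpa using (hd ⟨(x, y), hxy⟩).le⟩

theorem uniUltra_isUltrametric_general {X : Type} {A : X → X → ℝ} {d : ℝ} (hd₀ : 0 < d)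
    (hd : ∀ x y, x ≠ y → d ≤ A x y) : IsUltrametric (uniUltra A) :=
  have hsym : IsSym fun a b ↦ min (A a b) (A b a) := fun _ _ ↦ min_comm _ _
  isUltrametric_minChainCost hsym hd₀ fun x y hxy ↦ le_min (hd x y hxy) (hd y x hxy.symm)

/-- The unilateral clustering output is a valid ultrametric. -/
theorem uniUltra_isUltrametric
    (X : Type) [Fintype X] (A : X → X → ℝ) (hA : IsDissim A) :
    IsUltrametric (uniUltra A) := by
  obtain ⟨d, hd₀, hd⟩ := hA.exists_pos_forall_le
  exact uniUltra_isUltrametric_general hd₀ hd
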